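/- For all real x, y with |x| + |y| < 1 and x + y ≠ 0, the double series Q(x,y) := Σ_{n≥0} Σ_{k≥0} q_{n,k}·x^n·y^k converges absolutely and Q(x,y) = Σ_{ℓ≥0} (x+y)^ℓ·E[(x/(x+y))^{N_ℓ}]. -/

import Mathlib

open MeasureTheory

noncomputable section

/-- The triangle with vertices (0,0), (1,0), (0,1). -/
def T : Set (ℝ × ℝ) := convexHull ℝ {(0, 0), (1, 0), (0, 1)}

/-- The uniform distribution on `T`: twice Lebesgue measure restricted to `T`. -/
def μT : Measure (ℝ × ℝ) := (2 : ENNReal) • (volume.restrict T)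

/-- Joint law of `n` independent uniform points in `T`. -/
def P (n : ℕ) : Measure (Fin n → ℝ × ℝ) := Measure.pi fun _ => μT

/-- The random convex chain: convex hull of the points together with `(1,0)` and `(0,1)`. -/
def Tchain (n : ℕ) (ω : Fin n → ℝ × ℝ) : Set (ℝ × ℝ) :=
  convexHull ℝ (Set.range ω ∪ {(1, 0), (0, 1)})

/-- Normalized area `V_n = 2 vol(T_n)`. -/
def V (n : ℕ) (ω : Fin n → ℝ × ℝ) : ℝ := 2 * (volume (Tchain n ω)).toReal

/-- Number of vertices of `T_n` other than the two corners. -/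
def N (n : ℕ) (ω : Fin n → ℝ × ℝ) : ℕ :=
  (Set.extremePoints ℝ (Tchain n ω)).ncard - 2

/-- Normalized moments `q_{n,k} = C(n+k,k) E[V_n^k]`. -/
def q (n k : ℕ) : ℝ := ((n + k).choose k : ℝ) * ∫ ω, (V n ω) ^ k ∂ P n

/-- Probability generating function of `N_n`. -/
def G (n : ℕ) (t : ℝ) : ℝ := ∫ ω, t ^ (N n ω) ∂ P n

/-- Harmonic number. -/
def H (j : ℕ) : ℝ := ∑ i ∈ Finset.range j, 1 / ((i : ℝ) + 1)

/-- Generalized harmonic number of order 2. -/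
def H2 (j : ℕ) : ℝ := ∑ i ∈ Finset.range j, 1 / ((i : ℝ) + 1) ^ 2

/-- `c(k,ℓ)`: elementary symmetric polynomial `e_k` of `2/(j(j+1))`, `j = 1,…,ℓ`. -/
def c (k l : ℕ) : ℝ :=
  ∑ S ∈ (Finset.Icc 1 l).powersetCard k, ∏ j ∈ S, 2 / ((j : ℝ) * ((j : ℝ) + 1))

/-- The two corners. -/
def Cor : Set (ℝ × ℝ) := {(1, 0), (0, 1)}

/-- Hull of a family of points together with the corners. -/
def K {ι : Type*} (a : ι → ℝ × ℝ) : Set (ℝ × ℝ) := convexHull ℝ (Set.range a ∪ {(1, 0), (0, 1)})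

lemma convexHull_range_stdSimplex {ι : Type*} [Fintype ι] (v : ι → ℝ × ℝ) (p : ℝ × ℝ) :
    p ∈ convexHull ℝ (Set.range v) ↔ ∃ w ∈ stdSimplex ℝ ι, ∑ i, w i • v i = p := by
  classical
  constructor
  · intro hp
    let L : (ι → ℝ) →ₗ[ℝ] (ℝ × ℝ) := Fintype.linearCombination ℝ v
    have h1 : Set.range v = L '' (Set.range fun i j : ι => if i = j then (1 : ℝ) else 0) := by
      rw [← Set.range_comp]
      congr 1
      ext i : 1
      simp [L, Fintype.linearCombination_apply]
    rw [h1, ← LinearMap.image_convexHull, convexHull_basis_eq_stdSimplex] at hp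
    obtain ⟨w, hw, rfl⟩ := hp
    exact ⟨w, hw, by simp [L, Fintype.linearCombination_apply]⟩
  · rintro ⟨w, hw, rfl⟩
    exact mem_convexHull_of_exists_fintype w v hw.1 hw.2 (fun i => ⟨i, rfl⟩) rfl

lemma isClosed_hull {ι : Type*} [Fintype ι] :
    IsClosed {z : (ι → ℝ × ℝ) × (ℝ × ℝ) | z.2 ∈ convexHull ℝ (Set.range z.1)} := by
  have : CompactSpace (stdSimplex ℝ ι) := isCompact_iff_compactSpace.mp (isCompact_stdSimplex ℝ ι)
  have hc : IsClosed {u : (stdSimplex ℝ ι) × ((ι → ℝ × ℝ) × (ℝ × ℝ)) |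
      ∑ i, u.1.1 i • u.2.1 i = u.2.2} := by
    apply isClosed_eq
    · refine continuous_finsetSum _ fun i _ => Continuous.fun_smul ?_ ?_
      · exact (continuous_apply i).comp (continuous_subtype_val.comp continuous_fst)
      · exact (continuous_apply i).comp (continuous_fst.comp continuous_snd)
    · fun_prop
  have := isClosedMap_snd_of_compactSpace _ hc
  convert this using 1
  ext z
  simp only [Set.mem_ofPred_eq, convexHull_range_stdSimplex, Set.mem_image]
  constructor
  · rintro ⟨w, hw, h⟩
    exact ⟨(⟨w, hw⟩, z), h, rfl⟩
  · rintro ⟨⟨w, z'⟩, h, rfl⟩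
    exact ⟨w.1, w.2, h⟩

lemma K_eq {ι : Type*} (a : ι → ℝ × ℝ) :
    K a = convexHull ℝ (Set.range (Sum.elim a ![((1 : ℝ), (0 : ℝ)), (0, 1)])) := by
  unfold K
  rw [Set.Sum.elim_range]
  simp [Matrix.range_cons, Set.insert_comm]

lemma isClosed_K {ι : Type*} [Fintype ι] :
    IsClosed {z : (ι → ℝ × ℝ) × (ℝ × ℝ) | z.2 ∈ K z.1} := by
  simp_rw [K_eq]
  have hc : Continuous (fun z : (ι → ℝ × ℝ) × (ℝ × ℝ) =>
      (Sum.elim z.1 ![((1 : ℝ), (0 : ℝ)), (0, 1)], z.2)) := by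
    refine Continuous.prodMk (continuous_pi ?_) continuous_snd
    rintro (i | i)
    · exact (continuous_apply i).comp continuous_fst
    · exact continuous_const
  exact (isClosed_hull (ι := ι ⊕ Fin 2)).preimage hc

lemma T_eq : T = {p : ℝ × ℝ | 0 ≤ p.1 ∧ 0 ≤ p.2 ∧ p.1 + p.2 ≤ 1} := by
  apply Set.Subset.antisymm
  · refine convexHull_min ?_ ?_
    · rintro p (rfl | rfl | rfl) <;> simp
    · rintro p ⟨h1, h2, h3⟩ r ⟨h4, h5, h6⟩ a b ha hb hab
      refine ⟨?_, ?_, ?_⟩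
      · simp; positivity
      · simp; positivity
      · simp; nlinarith
  · rintro ⟨u, v⟩ ⟨h1, h2, h3⟩
    simp only at h1 h2 h3
    refine mem_convexHull_of_exists_fintype (ι := Fin 3) ![1 - u - v, u, v]
      ![(0, 0), (1, 0), (0, 1)] ?_ ?_ ?_ ?_
    · intro i; fin_cases i <;> simp <;> linarith
    · simp [Fin.sum_univ_three]; ring
    · intro i; fin_cases i <;> simp
    · simp [Fin.sum_univ_three]

lemma convex_T : Convex ℝ T := convex_convexHull _ _

lemma isClosed_T : IsClosed T := (Set.toFinite _).isClosed_convexHull ℝ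

lemma volume_T : volume T = 2⁻¹ := by
  rw [Measure.volume_eq_prod, Measure.prod_apply isClosed_T.measurableSet]
  have h : ∀ u : ℝ, volume (Prod.mk u ⁻¹' T)
      = (Set.Icc (0 : ℝ) 1).indicator (fun u => ENNReal.ofReal (1 - u)) u := by
    intro u
    by_cases hu : u ∈ Set.Icc (0 : ℝ) 1
    · have : Prod.mk u ⁻¹' T = Set.Icc 0 (1 - u) := by
        ext v
        simp only [T_eq, Set.mem_preimage, Set.mem_ofPred_eq, Set.mem_Icc]
        constructor
        · rintro ⟨_, h2, h3⟩; exact ⟨h2, by linarith⟩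
        · rintro ⟨h2, h3⟩; exact ⟨hu.1, h2, by linarith⟩
      rw [this, Set.indicator_of_mem hu, Real.volume_Icc, sub_zero]
    · have : Prod.mk u ⁻¹' T = ∅ := by
        ext v
        simp only [T_eq, Set.mem_preimage, Set.mem_ofPred_eq, Set.mem_empty_iff_false, iff_false]
        rintro ⟨h1, h2, h3⟩
        exact hu ⟨h1, by linarith⟩
      rw [this, Set.indicator_of_notMem hu, measure_empty]
  simp_rw [h]
  rw [lintegral_indicator measurableSet_Icc, ← ofReal_integral_eq_lintegral_ofReal]
  · rw [integral_Icc_eq_integral_Ioc, ← intervalIntegral.integral_of_le zero_le_one]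
    have : ∫ u in (0 : ℝ)..1, (1 - u) = 2⁻¹ := by
      rw [intervalIntegral.integral_sub (by simp) (by simp)]
      simp; norm_num
    rw [this, ENNReal.ofReal_inv_of_pos (by norm_num)]
    simp
  · exact (by fun_prop : Continuous fun u : ℝ => 1 - u).continuousOn.integrableOn_Icc
  · filter_upwards [ae_restrict_mem measurableSet_Icc] with u hu
    simpa using hu.2

instance : IsProbabilityMeasure μT := ⟨by
  simp [μT, volume_T]
  exact ENNReal.mul_inv_cancel (by norm_num) (by norm_num)⟩

instance : NullSingletonClass μT := ⟨fun p => by simp [μT]⟩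

instance (n : ℕ) : IsProbabilityMeasure (P n) := by unfold P; infer_instance

lemma ae_mem_T : ∀ᵐ p ∂μT, p ∈ T := by
  unfold μT
  exact Measure.ae_smul_measure (ae_restrict_mem isClosed_T.measurableSet) _

lemma ae_pi_mem_T {ι : Type*} [Fintype ι] :
    ∀ᵐ a ∂(Measure.pi fun _ : ι => μT), ∀ i, a i ∈ T := by
  rw [ae_all_iff]
  intro i
  exact (measurePreserving_eval (fun _ : ι => μT) i).quasiMeasurePreserving.ae ae_mem_T

lemma K_subset_T {ι : Type*} (a : ι → ℝ × ℝ) (h : ∀ i, a i ∈ T) : K a ⊆ T := by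
  refine convexHull_min (Set.union_subset ?_ ?_) convex_T
  · rintro _ ⟨i, rfl⟩; exact h i
  · exact (Set.subset_insert _ _).trans (subset_convexHull ℝ _)

lemma isClosed_Ka {ι : Type*} [Finite ι] (a : ι → ℝ × ℝ) : IsClosed (K a) :=
  (((Set.finite_range a).union (Set.toFinite _)).isClosed_convexHull ℝ)

lemma μT_K {ι : Type*} [Finite ι] (a : ι → ℝ × ℝ) (h : ∀ i, a i ∈ T) :
    (μT (K a)).toReal = 2 * (volume (K a)).toReal := by
  unfold μT
  rw [Measure.smul_apply, Measure.restrict_apply (isClosed_Ka a).measurableSet,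
    Set.inter_eq_left.mpr (K_subset_T a h)]
  simp

lemma V_le_one (n : ℕ) : ∀ᵐ ω ∂P n, V n ω ≤ 1 := by
  filter_upwards [ae_pi_mem_T (ι := Fin n)] with ω h
  have := μT_K ω h
  change 2 * (volume (K ω)).toReal ≤ 1
  rw [← this]
  exact ENNReal.toReal_le_of_le_ofReal zero_le_one (by simpa using prob_le_one)

lemma V_nonneg (n : ℕ) (ω) : 0 ≤ V n ω := by unfold V; positivity

lemma integral_V_nonneg (n k : ℕ) : 0 ≤ ∫ ω, (V n ω) ^ k ∂ P n :=
  integral_nonneg fun ω => pow_nonneg (V_nonneg n ω) k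

lemma integral_V_le (n k : ℕ) : ∫ ω, (V n ω) ^ k ∂ P n ≤ 1 := by
  have : ∫ ω, (V n ω) ^ k ∂ P n ≤ ∫ ω, (1 : ℝ) ∂ P n := by
    refine integral_mono_of_nonneg (Filter.Eventually.of_forall fun ω => pow_nonneg (V_nonneg n ω) k)
      (integrable_const _) ?_
    filter_upwards [V_le_one n] with ω h
    exact pow_le_one₀ (V_nonneg n ω) h
  simpa using this

/-- Points outside `S` lie in the hull of those in `S` and the corners. -/
def A {l : ℕ} (S : Finset (Fin l)) : Set (Fin l → ℝ × ℝ) :=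
  {ω | ∀ j, j ∉ S → ω j ∈ K (fun i : {i // i ∈ S} => ω i)}

lemma measurableSet_B (ι κ : Type*) [Fintype ι] [Fintype κ] :
    MeasurableSet {z : (ι → ℝ × ℝ) × (κ → ℝ × ℝ) | ∀ j, z.2 j ∈ K z.1} := by
  apply IsClosed.measurableSet
  rw [Set.ofPred_forall]
  refine isClosed_iInter fun j => ?_
  exact (isClosed_K (ι := ι)).preimage
    (f := fun z : (ι → ℝ × ℝ) × (κ → ℝ × ℝ) => (z.1, z.2 j)) (by fun_prop)

lemma A_eq {l : ℕ} (S : Finset (Fin l)) :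
    A S = (MeasurableEquiv.piEquivPiSubtypeProd (fun _ : Fin l => ℝ × ℝ) (fun i => i ∈ S)) ⁻¹'
      {z | ∀ j, z.2 j ∈ K z.1} := by
  ext ω
  simp only [A, Set.mem_ofPred_eq, Set.mem_preimage]
  exact ⟨fun h j => h j.1 j.2, fun h j hj => h ⟨j, hj⟩⟩

lemma measurableSet_A {l : ℕ} (S : Finset (Fin l)) : MeasurableSet (A S) := by
  rw [A_eq]
  exact (MeasurableEquiv.measurable _) (measurableSet_B _ _)

lemma prob_A {l : ℕ} (S : Finset (Fin l)) :
    (P l).real (A S) = ∫ ω, (V S.card ω) ^ (l - S.card) ∂ P S.card := by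
  have hmp := measurePreserving_piEquivPiSubtypeProd (fun _ : Fin l => μT) (fun i => i ∈ S)
  have hB := measurableSet_B {i // i ∈ S} {i // i ∉ S}
  have h1 : (P l) (A S) = ∫⁻ a, (Measure.pi fun _ : {i // i ∉ S} => μT)
      (Prod.mk a ⁻¹' {z : ({i // i ∈ S} → ℝ × ℝ) × ({i // i ∉ S} → ℝ × ℝ) | ∀ j, z.2 j ∈ K z.1})
      ∂(Measure.pi fun _ : {i // i ∈ S} => μT) := by
    rw [A_eq, P, hmp.measure_preimage hB.nullMeasurableSet, Measure.prod_apply hB]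
    congr!
  rw [measureReal_def, h1, ← integral_toReal (measurable_measure_prodMk_left hB).aemeasurable
    (Filter.Eventually.of_forall fun a => measure_lt_top _ _)]
  have hcard : Fintype.card {i // i ∉ S} = l - S.card := by
    rw [Fintype.card_subtype_compl]; simp
  have h2 : ∀ᵐ a ∂(Measure.pi fun _ : {i // i ∈ S} => μT),
      ((Measure.pi fun _ : {i // i ∉ S} => μT) (Prod.mk a ⁻¹'
        {z : ({i // i ∈ S} → ℝ × ℝ) × ({i // i ∉ S} → ℝ × ℝ) | ∀ j, z.2 j ∈ K z.1})).toReal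
      = (2 * (volume (K a)).toReal) ^ (l - S.card) := by
    filter_upwards [ae_pi_mem_T (ι := {i // i ∈ S})] with a ha
    have : (Prod.mk a ⁻¹'
        {z : ({i // i ∈ S} → ℝ × ℝ) × ({i // i ∉ S} → ℝ × ℝ) | ∀ j, z.2 j ∈ K z.1})
        = Set.univ.pi (fun _ => K a) := by
      ext b; simp
    rw [this, Measure.pi_pi, Finset.prod_const, Finset.card_univ, hcard, ENNReal.toReal_pow,
      μT_K a ha]
  rw [integral_congr_ae h2]
  have hmp2 := measurePreserving_piCongrLeft (fun _ : {i // i ∈ S} => μT) S.equivFin.symm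
  rw [← hmp2.integral_comp']
  unfold P
  refine integral_congr_ae (Filter.Eventually.of_forall fun ω => ?_)
  have : K (MeasurableEquiv.piCongrLeft (fun _ : {i // i ∈ S} => ℝ × ℝ) S.equivFin.symm ω)
      = Tchain _ ω := by
    unfold K Tchain
    congr 2
    ext p
    constructor
    · rintro ⟨i, rfl⟩
      refine ⟨S.equivFin i, ?_⟩
      have := MeasurableEquiv.piCongrLeft_apply_apply (β := fun _ : {i // i ∈ S} => ℝ × ℝ)
        S.equivFin.symm ω (S.equivFin i)
      rw [Equiv.symm_apply_apply] at this
      exact this.symm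
    · rintro ⟨i, rfl⟩
      exact ⟨S.equivFin.symm i, MeasurableEquiv.piCongrLeft_apply_apply
        (β := fun _ : {i // i ∈ S} => ℝ × ℝ) S.equivFin.symm ω i⟩
  simp only [V, this]

lemma ae_injective (l : ℕ) : ∀ᵐ ω ∂P l, Function.Injective ω := by
  have : ∀ᵐ ω ∂P l, ∀ i j, i ≠ j → ω i ≠ ω j := by
    simp_rw [ae_all_iff]
    intro i j hij
    have hind := (ProbabilityTheory.iIndepFun_pi (μ := fun _ : Fin l => μT)
      (X := fun _ => id) (fun _ => aemeasurable_id)).indepFun hij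
    have hm : ∀ i, AEMeasurable (fun ω : Fin l → ℝ × ℝ => id (ω i)) (Measure.pi fun _ => μT) :=
      fun i => (measurable_pi_apply i).aemeasurable
    rw [ProbabilityTheory.indepFun_iff_map_prod_eq_prod_map_map
      (hm i) (hm j)] at hind
    have e : ∀ i, Measure.map (fun ω : Fin l → ℝ × ℝ => id (ω i)) (Measure.pi fun _ => μT) = μT :=
      fun i => (measurePreserving_eval (fun _ : Fin l => μT) i).map_eq
    rw [e, e] at hind
    have hd : MeasurableSet {z : (ℝ × ℝ) × (ℝ × ℝ) | z.1 = z.2} :=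
      (isClosed_eq continuous_fst continuous_snd).measurableSet
    have h0 : (μT.prod μT) {z : (ℝ × ℝ) × (ℝ × ℝ) | z.1 = z.2} = 0 := by
      rw [Measure.measure_prod_null hd]
      refine Filter.Eventually.of_forall fun p => ?_
      have : Prod.mk p ⁻¹' {z : (ℝ × ℝ) × (ℝ × ℝ) | z.1 = z.2} = {p} := by
        ext; simp [eq_comm]
      simp [this]
    rw [← hind, Measure.map_apply (by fun_prop) hd] at h0
    rw [ae_iff]
    simpa [P] using h0
  filter_upwards [this] with ω h i j hij
  by_contra hne
  exact h i j hne hij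

lemma ae_ne_corner (l : ℕ) : ∀ᵐ ω ∂P l, ∀ i, ω i ∉ Cor := by
  rw [ae_all_iff]
  intro i
  filter_upwards [Measure.ae_eval_ne (fun _ : Fin l => μT) i (1, 0),
    Measure.ae_eval_ne (fun _ : Fin l => μT) i (0, 1)] with ω h1 h2
  rintro (h | h)
  · exact h1 h
  · exact h2 h

lemma cor_extreme {l : ℕ} (ω : Fin l → ℝ × ℝ) (h : ∀ i, ω i ∈ T) :
    Cor ⊆ Set.extremePoints ℝ (Tchain l ω) := by
  intro p hp
  have hpK : p ∈ Tchain l ω := subset_convexHull ℝ _ (Or.inr hp)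
  refine inter_extremePoints_subset_extremePoints_of_subset (K_subset_T ω h) ⟨hpK, ?_⟩
  rw [T_eq, mem_extremePoints]
  rcases hp with rfl | rfl
  · refine ⟨by simp, ?_⟩
    rintro ⟨a, b⟩ ⟨h1, h2, h3⟩ ⟨c, d⟩ ⟨h4, h5, h6⟩ ⟨s, t, hs, ht, hst, he⟩
    simp at he h1 h2 h3 h4 h5 h6
    have ha : a = 1 := by
      have : s * (1 - a) + t * (1 - c) = 0 := by linarith
      have h7 : 0 ≤ t * (1 - c) := mul_nonneg ht.le (by linarith)
      nlinarith
    have hc : c = 1 := by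
      have : s * (1 - a) + t * (1 - c) = 0 := by linarith
      have h7 : 0 ≤ s * (1 - a) := mul_nonneg hs.le (by linarith)
      nlinarith
    constructor <;> ext <;> simp <;> linarith
  · refine ⟨by simp, ?_⟩
    rintro ⟨a, b⟩ ⟨h1, h2, h3⟩ ⟨c, d⟩ ⟨h4, h5, h6⟩ ⟨s, t, hs, ht, hst, he⟩
    simp at he h1 h2 h3 h4 h5 h6
    have ha : b = 1 := by
      have : s * (1 - b) + t * (1 - d) = 0 := by linarith
      have h7 : 0 ≤ t * (1 - d) := mul_nonneg ht.le (by linarith)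
      nlinarith
    have hc : d = 1 := by
      have : s * (1 - b) + t * (1 - d) = 0 := by linarith
      have h7 : 0 ≤ s * (1 - b) := mul_nonneg hs.le (by linarith)
      nlinarith
    constructor <;> ext <;> simp <;> linarith

open Classical in
/-- Indices of the vertices. -/
def Ev {l : ℕ} (ω : Fin l → ℝ × ℝ) : Finset (Fin l) :=
  Finset.univ.filter fun i => ω i ∈ Set.extremePoints ℝ (Tchain l ω)

lemma ext_eq {l : ℕ} (ω : Fin l → ℝ × ℝ) (h : ∀ i, ω i ∈ T) :
    Set.extremePoints ℝ (Tchain l ω) = ω '' (Ev ω) ∪ Cor := by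
  apply Set.Subset.antisymm
  · intro p hp
    rcases extremePoints_convexHull_subset hp with ⟨i, rfl⟩ | hc
    · exact Or.inl ⟨i, by simpa [Ev] using hp, rfl⟩
    · exact Or.inr hc
  · refine Set.union_subset ?_ (cor_extreme ω h)
    rintro _ ⟨i, hi, rfl⟩
    simpa [Ev] using hi

lemma N_eq {l : ℕ} (ω : Fin l → ℝ × ℝ) (h : ∀ i, ω i ∈ T) (hi : Function.Injective ω)
    (hc : ∀ i, ω i ∉ Cor) : N l ω = (Ev ω).card := by
  have hcor : Cor.ncard = 2 := Set.ncard_pair (by simp)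
  have hcf : Cor.Finite := Set.toFinite {((1 : ℝ), (0 : ℝ)), (0, 1)}
  unfold N
  rw [ext_eq ω h, Set.ncard_union_eq ?_ (Set.toFinite _) hcf, hcor,
    Set.ncard_image_of_injective _ hi, Set.ncard_coe_finset, Nat.add_sub_cancel]
  rw [Set.disjoint_left]
  rintro _ ⟨i, _, rfl⟩
  exact hc i

lemma mem_A_iff {l : ℕ} (ω : Fin l → ℝ × ℝ) (h : ∀ i, ω i ∈ T) (hi : Function.Injective ω)
    (hc : ∀ i, ω i ∉ Cor) (S : Finset (Fin l)) : ω ∈ A S ↔ Ev ω ⊆ S := by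
  have hcl := isClosed_Ka (fun i : {i // i ∈ S} => ω i)
  constructor
  · intro hA
    have hK : Tchain l ω = K (fun i : {i // i ∈ S} => ω i) := by
      apply Set.Subset.antisymm
      · refine convexHull_min (Set.union_subset ?_ ?_) (convex_convexHull _ _)
        · rintro _ ⟨i, rfl⟩
          by_cases hiS : i ∈ S
          · exact subset_convexHull ℝ _ (Or.inl ⟨⟨i, hiS⟩, rfl⟩)
          · exact hA i hiS
        · exact Set.subset_union_right.trans (subset_convexHull ℝ _)
      · refine convexHull_mono (Set.union_subset_union_left _ ?_)
        rintro _ ⟨i, rfl⟩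
        exact ⟨i, rfl⟩
    intro i hiE
    have hiE : ω i ∈ Set.extremePoints ℝ (Tchain l ω) := by simpa [Ev] using hiE
    rw [hK] at hiE
    rcases extremePoints_convexHull_subset hiE with ⟨j, hj⟩ | hco
    · rw [← hi hj]; exact j.2
    · exact absurd hco (hc i)
  · intro hE j _
    have hcomp : IsCompact (Tchain l ω) :=
      ((Set.finite_range ω).union (Set.toFinite _)).isCompact_convexHull ℝ
    have hkm := closure_convexHull_extremePoints hcomp (convex_convexHull _ _)
    have hj : ω j ∈ Tchain l ω := subset_convexHull ℝ _ (Or.inl ⟨j, rfl⟩)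
    rw [← hkm] at hj
    refine closure_minimal ?_ hcl hj
    rw [ext_eq ω h]
    refine convexHull_min (Set.union_subset ?_ ?_) (convex_convexHull _ _)
    · rintro _ ⟨i, hiE, rfl⟩
      exact subset_convexHull ℝ _ (Or.inl ⟨⟨i, hE hiE⟩, rfl⟩)
    · exact Set.subset_union_right.trans (subset_convexHull ℝ _)

lemma sum_supersets {l : ℕ} (E : Finset (Fin l)) (x y : ℝ) :
    ∑ S : Finset (Fin l), (if E ⊆ S then x ^ S.card * y ^ (l - S.card) else 0)
      = x ^ E.card * (x + y) ^ (l - E.card) := by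
  have h := Finset.prod_add (fun _ : Fin l => x) (fun i => if i ∈ E then 0 else y) Finset.univ
  have h1 : ∏ i : Fin l, (x + if i ∈ E then 0 else y) = x ^ E.card * (x + y) ^ (l - E.card) := by
    have : ∀ i : Fin l, (x + if i ∈ E then 0 else y) = if i ∈ E then x else x + y := by
      intro i; split_ifs <;> simp
    simp_rw [this]
    rw [Finset.prod_ite, Finset.prod_const, Finset.prod_const]
    congr 2
    · simp
    · rw [Finset.filter_not, Finset.card_sdiff_of_subset (Finset.filter_subset _ _)]; simp
  rw [← h1, h, Finset.powerset_univ]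
  refine Finset.sum_congr rfl fun S _ => ?_
  rw [Finset.prod_const]
  split_ifs with hS
  · congr 1
    rw [Finset.prod_congr rfl (g := fun _ => y), Finset.prod_const,
      Finset.card_sdiff_of_subset (Finset.subset_univ _)]
    · simp
    · intro i hi
      rw [if_neg]
      intro hE
      exact (Finset.mem_sdiff.mp hi).2 (hS hE)
  · obtain ⟨i, hiE, hiS⟩ := Finset.not_subset.mp hS
    rw [Finset.prod_eq_zero (i := i) (by simp [hiS]) (by simp [hiE]), mul_zero]

lemma level (l : ℕ) (x y : ℝ) (hxy : x + y ≠ 0) :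
    ∑ p ∈ Finset.HasAntidiagonal.antidiagonal l, q p.1 p.2 * x ^ p.1 * y ^ p.2
      = (x + y) ^ l * G l (x / (x + y)) := by
  have hG : (x + y) ^ l * G l (x / (x + y))
      = ∫ ω, ∑ S : Finset (Fin l), (A S).indicator (fun _ => x ^ S.card * y ^ (l - S.card)) ω
        ∂ P l := by
    unfold G
    rw [← integral_const_mul]
    refine integral_congr_ae ?_
    filter_upwards [ae_pi_mem_T (ι := Fin l), ae_injective l, ae_ne_corner l] with ω h hi hc
    have hle : (Ev ω).card ≤ l := by simpa using Finset.card_le_univ (Ev ω)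
    have e : ∀ S : Finset (Fin l), (A S).indicator (fun _ => x ^ S.card * y ^ (l - S.card)) ω
        = if Ev ω ⊆ S then x ^ S.card * y ^ (l - S.card) else 0 := by
      intro S
      by_cases hS : Ev ω ⊆ S
      · rw [if_pos hS, Set.indicator_of_mem ((mem_A_iff ω h hi hc S).2 hS)]
      · rw [if_neg hS, Set.indicator_of_notMem (fun h' => hS ((mem_A_iff ω h hi hc S).1 h'))]
    simp_rw [e]
    rw [sum_supersets, N_eq ω h hi hc, div_pow, ← mul_div_assoc, div_eq_iff (pow_ne_zero _ hxy),
      mul_assoc, ← pow_add, Nat.sub_add_cancel hle, mul_comm]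
  rw [hG, integral_finsetSum _ fun S _ => (integrable_const _).indicator (measurableSet_A S)]
  simp_rw [fun S : Finset (Fin l) => integral_indicator_const (μ := P l)
    (x ^ S.card * y ^ (l - S.card)) (measurableSet_A S), prob_A, smul_eq_mul]
  rw [← Finset.powerset_univ, Finset.sum_powerset_apply_card
    (fun n => (∫ ω, (V n ω) ^ (l - n) ∂ P n) * (x ^ n * y ^ (l - n)))]
  rw [Finset.Nat.sum_antidiagonal_eq_sum_range_succ (fun n k => q n k * x ^ n * y ^ k)]
  simp only [Finset.card_univ, Fintype.card_fin, Nat.succ_eq_add_one]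
  refine Finset.sum_congr rfl fun n hn => ?_
  have hn : n ≤ l := Nat.lt_succ_iff.mp (Finset.mem_range.mp hn)
  rw [q, Nat.add_sub_cancel' hn, Nat.choose_symm hn, nsmul_eq_mul]
  ring

lemma summ (x y : ℝ) (h : |x| + |y| < 1) :
    Summable (fun p : ℕ × ℕ => |q p.1 p.2 * x ^ p.1 * y ^ p.2|) := by
  have hs : Summable (fun p : ℕ × ℕ => ((p.1 + p.2).choose p.2 : ℝ) * |x| ^ p.1 * |y| ^ p.2) := by
    rw [← Finset.HasAntidiagonal.sigmaAntidiagonalEquivProd.summable_iff]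
    rw [summable_sigma_of_nonneg (fun _ => by simp only [Function.comp]; positivity)]
    refine ⟨fun l => (hasSum_fintype _).summable, ?_⟩
    convert summable_geometric_of_lt_one (by positivity) h using 2 with l
    rw [tsum_fintype, (Commute.all |x| |y|).add_pow', Finset.univ_eq_attach,
      ← Finset.sum_attach (Finset.HasAntidiagonal.antidiagonal l)]
    refine Finset.sum_congr rfl fun p _ => ?_
    have hp := Finset.HasAntidiagonal.mem_antidiagonal.mp p.2
    simp only [Function.comp, Finset.HasAntidiagonal.sigmaAntidiagonalEquivProd_apply, nsmul_eq_mul]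
    rw [Nat.choose_symm_add.symm, hp, mul_assoc]
  refine hs.of_nonneg_of_le (fun _ => abs_nonneg _) fun p => ?_
  rw [abs_mul, abs_mul, abs_pow, abs_pow]
  gcongr
  rw [q, abs_of_nonneg (mul_nonneg (by positivity) (integral_V_nonneg _ _))]
  exact mul_le_of_le_one_right (by positivity) (integral_V_le _ _)

/-- for `|x| + |y| < 1`, `x + y ≠ 0`, the series
`Q(x,y) = Σ q_{n,k} x^n y^k` converges absolutely and equals `Σ_ℓ (x+y)^ℓ G_ℓ(x/(x+y))`. -/
theorem stmt5 (x y : ℝ) (h : |x| + |y| < 1) (hxy : x + y ≠ 0) :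
    Summable (fun p : ℕ × ℕ => |q p.1 p.2 * x ^ p.1 * y ^ p.2|) ∧
    (∑' p : ℕ × ℕ, q p.1 p.2 * x ^ p.1 * y ^ p.2
      = ∑' l : ℕ, (x + y) ^ l * G l (x / (x + y))) := by
  have hs := summ x y h
  refine ⟨hs, ?_⟩
  have hs' := hs.of_abs
  rw [← Finset.HasAntidiagonal.sigmaAntidiagonalEquivProd.tsum_eq]
  refine (Summable.tsum_sigma' (fun l => (hasSum_fintype _).summable)
      (Finset.HasAntidiagonal.sigmaAntidiagonalEquivProd.summable_iff.mpr hs')).trans ?_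
  refine tsum_congr fun l => ?_
  rw [tsum_fintype, ← level l x y hxy, Finset.univ_eq_attach,
    ← Finset.sum_attach (Finset.HasAntidiagonal.antidiagonal l)]
  rfl

end
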